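/- Let α ∈ (1,2), let d ≥ 1, let a₁,…,a_d ≥ 0 be nonnegative reals and b₁,…,b_d > 0 be positive reals. Then ∫₀^∞ (Σ_{i=1}^d a_i e^{−2 b_i t})^{α/2} dt ≥ (Σ_{i=1}^d a_i / (α b_i)^{2/α})^{α/2}. -/

import Mathlib

open MeasureTheory

/-!
Write `p = α / 2`, `c i = a i / (α * b i) ^ (2 / α)` and `S = ∑ i, c i`. The functions
`g i t = (α * b i) ^ (2 / α) * exp (-2 * b i * t)` are normalised so that
`∫ (g i) ^ p = ∫ α * b i * exp (-(α * b i) * t) = 1`, and the integrand is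
`(S * ∑ i, (c i / S) * g i) ^ p`. Concavity of `x ↦ x ^ p` with the weights `c i / S` bounds it
below pointwise by `S ^ p * ∑ i, (c i / S) * (g i) ^ p`, whose integral is exactly `S ^ p`.
This is the usual proof of the reverse Minkowski inequality by normalisation.
-/

/-- The integrand is dominated by a single exponential, with rate governed by the smallest `b i`;
without this the Bochner integral could take the junk value `0`. -/
lemma integrableOn_sum_exp_rpow {α : ℝ} (hα : 0 < α) {d : ℕ} (hd : 1 ≤ d)
    {a b : Fin d → ℝ} (ha : ∀ i, 0 ≤ a i) (hb : ∀ i, 0 < b i) :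
    IntegrableOn (fun t : ℝ => (∑ i, a i * Real.exp (-2 * b i * t)) ^ (α / 2))
      (Set.Ioi (0 : ℝ)) := by
  have : Nonempty (Fin d) := ⟨⟨0, hd⟩⟩
  obtain ⟨j, hj⟩ := Finite.exists_min b
  have hdom : IntegrableOn
      (fun t : ℝ => (∑ i, a i) ^ (α / 2) * Real.exp (-(α * b j) * t)) (Set.Ioi (0 : ℝ)) :=
    (exp_neg_integrableOn_Ioi 0 (mul_pos hα (hb j))).const_mul _
  have hcont : Continuous (fun t : ℝ => (∑ i, a i * Real.exp (-2 * b i * t)) ^ (α / 2)) :=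
    Continuous.rpow_const (by fun_prop) fun _ => Or.inr (by positivity)
  refine Integrable.mono' hdom hcont.aestronglyMeasurable ?_
  refine (ae_restrict_iff' measurableSet_Ioi).2 (Filter.Eventually.of_forall fun t ht => ?_)
  have ht : 0 < t := ht
  have h0 : 0 ≤ ∑ i, a i * Real.exp (-2 * b i * t) :=
    Finset.sum_nonneg fun i _ => mul_nonneg (ha i) (Real.exp_pos _).le
  rw [Real.norm_of_nonneg (Real.rpow_nonneg h0 _)]
  have hle : ∑ i, a i * Real.exp (-2 * b i * t) ≤ (∑ i, a i) * Real.exp (-2 * b j * t) := by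
    rw [Finset.sum_mul]
    refine Finset.sum_le_sum fun i _ => mul_le_mul_of_nonneg_left ?_ (ha i)
    apply Real.exp_le_exp.2
    nlinarith [mul_le_mul_of_nonneg_right (hj i) ht.le]
  calc _ ≤ ((∑ i, a i) * Real.exp (-2 * b j * t)) ^ (α / 2) :=
        Real.rpow_le_rpow h0 hle (by positivity)
    _ = _ := by
        rw [Real.mul_rpow (Finset.sum_nonneg fun i _ => ha i) (Real.exp_pos _).le,
          ← Real.exp_mul]
        congr 2
        ring

/-- For `α ∈ (1,2)`, `d ≥ 1`, nonnegative `a i` and positive `b i`,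
`∫₀^∞ (∑ i, a i e^{−2 b i t})^{α/2} dt ≥ (∑ i, a i / (α b i)^{2/α})^{α/2}`. -/
theorem stmt_1 (α : ℝ) (hα : α ∈ Set.Ioo (1:ℝ) 2) (d : ℕ) (hd : 1 ≤ d)
    (a b : Fin d → ℝ) (ha : ∀ i, 0 ≤ a i) (hb : ∀ i, 0 < b i) :
    (∑ i, a i / (α * b i) ^ (2/α)) ^ (α/2)
      ≤ ∫ t in Set.Ioi (0:ℝ), (∑ i, a i * Real.exp (-2 * b i * t)) ^ (α/2) := by
  obtain ⟨h1, h2⟩ := hα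
  have hα0 : 0 < α := by linarith
  have hab : ∀ i, 0 < α * b i := fun i => mul_pos hα0 (hb i)
  have hk : ∀ i, 0 < (α * b i) ^ (2 / α) := fun i => Real.rpow_pos_of_pos (hab i) _
  set c : Fin d → ℝ := fun i => a i / (α * b i) ^ (2 / α) with hc
  have hc0 : ∀ i, 0 ≤ c i := fun i => div_nonneg (ha i) (hk i).le
  set S : ℝ := ∑ i, c i with hS
  have hS0 : 0 ≤ S := Finset.sum_nonneg fun i _ => hc0 i
  rcases hS0.eq_or_lt with hz | hpos
  · rw [← hz, Real.zero_rpow (by positivity)]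
    exact integral_nonneg fun t => Real.rpow_nonneg
      (Finset.sum_nonneg fun i _ => mul_nonneg (ha i) (Real.exp_pos _).le) _
  have hw : ∑ i, c i / S = 1 := by rw [← Finset.sum_div, ← hS, div_self hpos.ne']
  have hint : ∀ i, IntegrableOn
      (fun t : ℝ => c i / S * (α * b i * Real.exp (-(α * b i) * t))) (Set.Ioi (0 : ℝ)) :=
    fun i => ((exp_neg_integrableOn_Ioi 0 (hab i)).const_mul _).const_mul _
  have hone : ∀ i, ∫ t in Set.Ioi (0 : ℝ), α * b i * Real.exp (-(α * b i) * t) = 1 := by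
    intro i
    rw [integral_const_mul, integral_exp_mul_Ioi (neg_lt_zero.2 (hab i))]
    have := (hab i).ne'
    simp only [mul_zero, Real.exp_zero]
    rw [neg_div_neg_eq, mul_one_div_cancel this]
  have hlow : ∫ t in Set.Ioi (0 : ℝ),
      S ^ (α / 2) * ∑ i, c i / S * (α * b i * Real.exp (-(α * b i) * t)) = S ^ (α / 2) := by
    rw [integral_const_mul, integral_finsetSum _ fun i _ => hint i]
    simp_rw [integral_const_mul (c _ / S), hone, mul_one, hw, mul_one]
  rw [← hlow]
  refine integral_mono ((integrable_finsetSum _ fun i _ => hint i).const_mul _)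
    (integrableOn_sum_exp_rpow hα0 hd ha hb) fun t => ?_
  have hg0 : ∀ i, 0 ≤ (α * b i) ^ (2 / α) * Real.exp (-2 * b i * t) :=
    fun i => mul_nonneg (hk i).le (Real.exp_pos _).le
  have hgp : ∀ i, ((α * b i) ^ (2 / α) * Real.exp (-2 * b i * t)) ^ (α / 2)
      = α * b i * Real.exp (-(α * b i) * t) := by
    intro i
    rw [Real.mul_rpow (hk i).le (Real.exp_pos _).le, ← Real.rpow_mul (hab i).le,
      ← Real.exp_mul, show 2 / α * (α / 2) = 1 by field_simp, Real.rpow_one]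
    congr 2
    ring
  have hsum : ∑ i, a i * Real.exp (-2 * b i * t)
      = S * ∑ i, c i / S * ((α * b i) ^ (2 / α) * Real.exp (-2 * b i * t)) := by
    rw [Finset.mul_sum]
    refine Finset.sum_congr rfl fun i _ => ?_
    rw [← mul_assoc, ← mul_assoc, mul_div_cancel₀ _ hpos.ne', div_mul_cancel₀ _ (hk i).ne']
  have hconc := (Real.concaveOn_rpow (p := α / 2) (by positivity) (by linarith)).le_map_sum
    (t := Finset.univ) (w := fun i => c i / S)
    (p := fun i => (α * b i) ^ (2 / α) * Real.exp (-2 * b i * t))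
    (fun i _ => div_nonneg (hc0 i) hS0) hw (fun i _ => hg0 i)
  simp only [smul_eq_mul, hgp] at hconc
  simp only []
  rw [hsum, Real.mul_rpow hS0 (Finset.sum_nonneg fun i _ =>
    mul_nonneg (div_nonneg (hc0 i) hS0) (hg0 i))]
  exact mul_le_mul_of_nonneg_left hconc (Real.rpow_nonneg hS0 _)
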